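/- arXiv:1205.6256 — 3 statements merged into one kernel-verified Lean document; each statement's English description precedes it below -/
import Mathlib

section
/- If L is a finite distributive lattice, then for every meet-irreducible m of L the system E(m) has a non-negative integer solution. -/
open Classical

section CFGdefs

variable {V : Type*}

/-- Out-degree of a vertex in a directed multigraph with edge multiplicities `E`. -/
noncomputable def outDeg (E : V → V → ℕ) (v : V) : ℕ := ∑ᶠ u, E v u

/-- A vertex is a sink if all its outgoing edges are loops. -/
def IsSink (E : V → V → ℕ) (v : V) : Prop := outDeg E v = E v v

/-- A vertex is firable in configuration `c`. -/
def Firable (E : V → V → ℕ) (c : V → ℕ) (v : V) : Prop :=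
  ¬ IsSink E v ∧ outDeg E v ≤ c v

/-- The result of firing vertex `v` in configuration `c`. -/
noncomputable def fire (E : V → V → ℕ) (c : V → ℕ) (v : V) : V → ℕ :=
  fun u => if u = v then c v - outDeg E v + E v v else c u + E v u

/-- The configuration obtained by firing a list of vertices in order. -/
noncomputable def fireList (E : V → V → ℕ) : (V → ℕ) → List V → (V → ℕ)
  | c, [] => c
  | c, v :: l => fireList E (fire E c v) l

/-- A list of vertices is a valid firing sequence from `c`. -/
def ValidSeq (E : V → V → ℕ) : (V → ℕ) → List V → Prop
  | _, [] => True
  | c, v :: l => Firable E c v ∧ ValidSeq E (fire E c v) l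

/-- `c'` is reachable from `c` by a finite sequence of firings. -/
def Reaches (E : V → V → ℕ) (c c' : V → ℕ) : Prop :=
  ∃ l : List V, ValidSeq E c l ∧ fireList E c l = c'

/-- A configuration with no firable vertex. -/
def FixedPt (E : V → V → ℕ) (c : V → ℕ) : Prop := ∀ v, ¬ Firable E c v

/-- The chip firing game `CFG(G,O)` reaches a unique fixed point. -/
def ReachesUFP (E : V → V → ℕ) (O : V → ℕ) : Prop :=
  ∃ fp : V → ℕ, Reaches E O fp ∧ FixedPt E fp ∧ ∀ c, Reaches E O c → Reaches E c fp

/-- The game is simple: in every firing sequence from `O` to the fixed point,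
each vertex fires at most once. -/
def SimpleCFG (E : V → V → ℕ) (O : V → ℕ) : Prop :=
  ∀ l : List V, ValidSeq E O l → FixedPt E (fireList E O l) → l.Nodup

/-- Single firing step from `c` to `c'` by firing vertex `v`. -/
def FireStep (E : V → V → ℕ) (c : V → ℕ) (v : V) (c' : V → ℕ) : Prop :=
  Firable E c v ∧ fire E c v = c'

/-- The partial order `L` is order-isomorphic to the configuration space of
`CFG(G,O)` ordered by reachability. -/
def Generates (E : V → V → ℕ) (O : V → ℕ) (L : Type*) [PartialOrder L] : Prop :=
  ∃ f : L ≃ {c : V → ℕ // Reaches E O c},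
    ∀ a b : L, a ≤ b ↔ Reaches E (f a).val (f b).val

/-- The support graph is connected (as an undirected graph). -/
def ConnectedG (E : V → V → ℕ) : Prop :=
  ∀ u v : V, Relation.ReflTransGen (fun a b => 0 < E a b ∨ 0 < E b a) u v

/-- The support graph together with its initial data is an Abelian Sandpile Model. -/
def IsASM (E : V → V → ℕ) : Prop :=
  ConnectedG E ∧ ∃ s : V, IsSink E s ∧ (∀ v, IsSink E v → v = s) ∧
    ∀ v₁ v₂ : V, v₁ ≠ v₂ → v₁ ≠ s → v₂ ≠ s → E v₁ v₂ = E v₂ v₁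

/-- The directed multigraph has no directed cycle. -/
def AcyclicG (E : V → V → ℕ) : Prop :=
  ∀ v : V, ¬ Relation.TransGen (fun a b => 0 < E a b) v v

end CFGdefs

/-- `L` is generated by some chip firing game reaching a unique fixed point. -/
def MemLCFG (L : Type*) [PartialOrder L] : Prop :=
  ∃ (V : Type) (_ : Finite V) (E : V → V → ℕ) (O : V → ℕ),
    ReachesUFP E O ∧ Generates E O L

/-- `L` is generated by some Abelian Sandpile Model reaching a unique fixed point. -/
def MemLASM (L : Type*) [PartialOrder L] : Prop :=
  ∃ (V : Type) (_ : Finite V) (E : V → V → ℕ) (O : V → ℕ),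
    IsASM E ∧ ReachesUFP E O ∧ Generates E O L

section Latticedefs

variable {L : Type*} [Lattice L]

/-- `m` is meet-irreducible: it has exactly one upper cover. -/
def MeetIrred (m : L) : Prop := ∃! y, m ⋖ y

/-- `j` is join-irreducible: it has exactly one lower cover. -/
def JoinIrred (j : L) : Prop := ∃! y, y ⋖ j

/-- The set `M_x \ M_y` of meet-irreducibles above `x` but not above `y`. -/
def MsetDiff (x y : L) : Set L := {m | MeetIrred m ∧ x ≤ m ∧ ¬ y ≤ m}

/-- The set `M \ M_a` of meet-irreducibles not above `a`. -/
def MnotAbove (a : L) : Set L := {m | MeetIrred m ∧ ¬ a ≤ m}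

/-- `x⁺`: the join of all upper covers of `x`. -/
noncomputable def uplus [Fintype L] [OrderBot L] (x : L) : L :=
  Finset.univ.sup (fun y => if x ⋖ y then y else ⊥)

/-- `L` is upper locally distributive: for every `x ≠ ⊤` the interval `[x, x⁺]`
is isomorphic to a Boolean lattice (a hypercube). -/
def IsULD (L : Type*) [Lattice L] [Fintype L] [BoundedOrder L] : Prop :=
  ∀ x : L, x ≠ ⊤ → ∃ n : ℕ, Nonempty (↥(Set.Icc x (uplus x)) ≃o Set (Fin n))

/-- `𝔘_m`: the minimal elements of `{x : ∃ y, x ⋖ y and 𝔪(x,y) = m}`. -/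
def Uset (m : L) : Set L :=
  {x | Minimal (fun z => ∃ y, z ⋖ y ∧ MsetDiff z y = {m}) x}

/-- `𝔏_m`: the maximal elements of `{x : a ≰ x for every a ∈ 𝔘_m}`. -/
def Lset (m : L) : Set L :=
  {x | Maximal (fun z => ∀ a ∈ Uset m, ¬ a ≤ z) x}

/-- `(w, e)` is a (non-negative integer) solution of the system `E(m)`. -/
def SolvesE [OrderBot L] (m : L) (w : ℕ) (e : L → ℕ) : Prop :=
  (Uset m = {(⊥ : L)} → 1 ≤ w) ∧
  (Uset m ≠ {(⊥ : L)} →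
    (∀ a ∈ Lset m, (∑ᶠ x ∈ MnotAbove a, e x) < w) ∧
    (∀ a ∈ Uset m, w ≤ ∑ᶠ x ∈ MnotAbove a, e x))

/-- The system `E(m)` has a non-negative integer solution. -/
def HasSolE [OrderBot L] (m : L) : Prop := ∃ w e, SolvesE m w e

/-- The variable `e_{x,m}` occurs in the system `𝔈(m)`. -/
def VarOccurs [OrderBot L] (x m : L) : Prop :=
  MeetIrred m ∧ Uset m ≠ {(⊥ : L)} ∧ ∃ a ∈ Uset m ∪ Lset m, x ∈ MnotAbove a

/-- `(W, Ee)` is a non-negative integer solution of the system `Ω`. -/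
def SolvesOmega [OrderBot L] (W : L → ℕ) (Ee : L → L → ℕ) : Prop :=
  (∀ m : L, MeetIrred m → SolvesE m (W m) (fun x => Ee x m)) ∧
  (∀ m₁ m₂ : L, m₁ ≠ m₂ → VarOccurs m₁ m₂ → VarOccurs m₂ m₁ → Ee m₁ m₂ = Ee m₂ m₁)

/-- The edge relation of the directed graph `𝒢` on the meet-irreducibles. -/
def Gedge (m₁ m₂ : L) : Prop :=
  MeetIrred m₁ ∧ MeetIrred m₂ ∧ ∃ a ∈ Uset m₂, m₁ ∈ MnotAbove a

end Latticedefs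

/-- The system `Ω` has a non-negative integer solution. -/
def HasSolOmega (L : Type*) [Lattice L] [OrderBot L] : Prop :=
  ∃ W Ee, SolvesOmega (L := L) W Ee

/-- The directed graph `𝒢` on the meet-irreducibles is acyclic. -/
def GAcyclic (L : Type*) [Lattice L] : Prop :=
  ∀ m : L, ¬ Relation.TransGen (Gedge (L := L)) m m

/-!
In a distributive lattice meet-irreducibles are meet-prime, so the lower ends of the covers
labelled `m` are closed under meets and `𝔘_m` has at most one element. If `𝔘_m = {a}` with
`a ≠ ⊥`, giving weight `1` to the variables `e_x` with `x ∈ M ∖ M_a` and weight `0` to the others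
solves `E(m)` with `w = |M ∖ M_a|`: every `l ∈ 𝔏_m` satisfies `a ≰ l`, so `M ∖ M_l` misses some
element of `M ∖ M_a`.
-/

lemma subsingleton_setOf_minimal_of_infClosed {α : Type*} [SemilatticeInf α] {s : Set α}
    (hs : InfClosed s) : {x | Minimal (· ∈ s) x}.Subsingleton := by
  intro x hx x' hx'
  have hinf : x ⊓ x' ∈ s := hs hx.1 hx'.1
  exact (hx.eq_of_le hinf inf_le_left).symm.trans (hx'.eq_of_le hinf inf_le_right)

section MeetIrreducibles

variable {L : Type*} [Lattice L] {m x y z : L}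

lemma meetIrred_iff_infIrred [IsStronglyAtomic L] : MeetIrred m ↔ InfIrred m := by
  constructor
  · rintro ⟨c, hmc, hunique⟩
    have cover_le {d : L} (hmd : m < d) : c ≤ d := by
      obtain ⟨c', hmc', hc'd⟩ := exists_covBy_le_of_lt hmd
      exact hunique c' hmc' ▸ hc'd
    refine ⟨not_isMax_of_lt hmc.lt, fun d d' hdd' => ?_⟩
    by_contra! hne
    have hmd : m < d := (hdd' ▸ inf_le_left : m ≤ d).lt_of_ne' hne.1
    have hmd' : m < d' := (hdd' ▸ inf_le_right : m ≤ d').lt_of_ne' hne.2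
    exact hmc.lt.not_ge (hdd' ▸ le_inf (cover_le hmd) (cover_le hmd'))
  · intro hm
    obtain ⟨d, hmd⟩ := not_isMax_iff.1 hm.1
    obtain ⟨c, hmc, -⟩ := exists_covBy_le_of_lt hmd
    refine ⟨c, hmc, fun c' hmc' => by_contra fun hne => ?_⟩
    have hinf : c' ⊓ c = m := hmc'.wcovBy.inf_eq hmc.wcovBy hne
    exact (hm.2 hinf).elim hmc'.ne' hmc.ne'

lemma exists_meetIrred_of_not_le [OrderTop L] [WellFoundedGT L] [IsStronglyAtomic L]
    (h : ¬ y ≤ x) : ∃ n, MeetIrred n ∧ x ≤ n ∧ ¬ y ≤ n := by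
  obtain ⟨s, rfl, hs⟩ := exists_infIrred_decomposition x
  obtain ⟨n, hn, hyn⟩ : ∃ n ∈ s, ¬ y ≤ n := by simpa [Finset.le_inf_iff] using h
  exact ⟨n, meetIrred_iff_infIrred.2 (hs hn), Finset.inf_le hn, hyn⟩

lemma mnotAbove_subset_mnotAbove_iff [OrderTop L] [WellFoundedGT L] [IsStronglyAtomic L] :
    MnotAbove x ⊆ MnotAbove y ↔ x ≤ y := by
  refine ⟨fun h => by_contra fun hxy => ?_, fun h n hn => ⟨hn.1, fun hyn => hn.2 (h.trans hyn)⟩⟩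
  obtain ⟨n, hn, hyn, hxn⟩ := exists_meetIrred_of_not_le hxy
  exact (h ⟨hn, hxn⟩).2 hyn

lemma msetDiff_subset_msetDiff_right (h : y ≤ z) : MsetDiff x y ⊆ MsetDiff x z :=
  fun _ hn => ⟨hn.1, hn.2.1, fun hzn => hn.2.2 (h.trans hzn)⟩

end MeetIrreducibles

section Distributive

variable {L : Type*} [DistribLattice L] [IsStronglyAtomic L] {m x x' y y' : L}

lemma MeetIrred.inf_le (hm : MeetIrred m) : x ⊓ y ≤ m ↔ x ≤ m ∨ y ≤ m :=
  (meetIrred_iff_infIrred.1 hm).infPrime.inf_le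

lemma msetDiff_inf_inf_subset :
    MsetDiff (x ⊓ x') (y ⊓ y') ⊆ MsetDiff x y ∪ MsetDiff x' y' := by
  rintro n ⟨hn, hxn, hyn⟩
  rw [hn.inf_le] at hxn hyn
  push Not at hyn
  exact hxn.imp (⟨hn, ·, hyn.1⟩) (⟨hn, ·, hyn.2⟩)

lemma infClosed_setOf_covBy_msetDiff_eq [OrderTop L] [WellFoundedGT L] (m : L) :
    InfClosed {x | ∃ y, x ⋖ y ∧ MsetDiff x y = {m}} := by
  rintro x ⟨y, hxy, hy⟩ x' ⟨y', hxy', hy'⟩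
  obtain ⟨hm, hxm, hym⟩ : m ∈ MsetDiff x y := hy ▸ rfl
  obtain ⟨-, -, hym'⟩ : m ∈ MsetDiff x' y' := hy' ▸ rfl
  have hle : ¬ y ⊓ y' ≤ x ⊓ x' := fun h =>
    (hm.inf_le.1 (h.trans (inf_le_left.trans hxm))).elim hym hym'
  have hlt : x ⊓ x' < y ⊓ y' := (inf_le_inf hxy.le hxy'.le).lt_of_not_ge hle
  obtain ⟨c, hc, hcy⟩ := exists_covBy_le_of_lt hlt
  have hsub : MsetDiff (x ⊓ x') c ⊆ {m} := calc
    MsetDiff (x ⊓ x') c ⊆ MsetDiff (x ⊓ x') (y ⊓ y') := msetDiff_subset_msetDiff_right hcy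
    _ ⊆ MsetDiff x y ∪ MsetDiff x' y' := msetDiff_inf_inf_subset
    _ = {m} := by rw [hy, hy', Set.union_self]
  have hne : (MsetDiff (x ⊓ x') c).Nonempty := exists_meetIrred_of_not_le hc.lt.not_ge
  exact ⟨c, hc, hne.subset_singleton_iff.1 hsub⟩

lemma subsingleton_uset [OrderTop L] [WellFoundedGT L] (m : L) : (Uset m).Subsingleton :=
  subsingleton_setOf_minimal_of_infClosed (infClosed_setOf_covBy_msetDiff_eq m)

end Distributive

lemma finsum_mem_indicator_one {α : Type*} (s t : Set α) :
    ∑ᶠ x ∈ s, t.indicator (1 : α → ℕ) x = (s ∩ t).ncard := by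
  rw [finsum_mem_def, Set.indicator_indicator, ← finsum_mem_def]
  exact finsum_one

lemma hasSolE_of_subsingleton_uset {L : Type*} [Lattice L] [BoundedOrder L] [Finite L] {m : L}
    (hU : (Uset m).Subsingleton) : HasSolE m := by
  by_cases hbot : Uset m = {⊥}
  · exact ⟨1, 0, fun _ => le_rfl, fun h => (h hbot).elim⟩
  rcases hU.eq_empty_or_singleton with hempty | ⟨a, ha⟩
  · exact ⟨1, 0, fun _ => le_rfl, fun _ => by simp [hempty]⟩
  refine ⟨(MnotAbove a).ncard, (MnotAbove a).indicator 1, fun h => (hbot h).elim, fun _ => ?_⟩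
  simp only [finsum_mem_indicator_one, ha, Set.mem_singleton_iff, forall_eq, Set.inter_self,
    le_refl, and_true]
  intro l hl
  have hal : ¬ a ≤ l := hl.1 a (ha ▸ rfl)
  refine Set.ncard_lt_ncard (Set.inter_ssubset_right_iff.2 ?_)
  rwa [mnotAbove_subset_mnotAbove_iff]

/-- in a finite distributive lattice, for every meet-irreducible `m`
the system `E(m)` has a non-negative integer solution. -/
theorem stmt7 {L : Type*} [DistribLattice L] [Fintype L] [BoundedOrder L]
    (m : L) (hm : MeetIrred m) :
    HasSolE m :=
  hasSolE_of_subsingleton_uset (subsingleton_uset m)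
end

section
/- Every finite distributive lattice belongs to L(CFG), i.e. every finite distributive lattice is order-isomorphic to the configuration space of some chip firing game reaching a unique fixed point. -/
open Classical

/-!
By Birkhoff's theorem a finite distributive lattice is isomorphic to the lattice of lower sets of
the finite poset `P` of its join-irreducibles, so it suffices to play a game on `P` in which each
element fires at most once, and only after everything below it has fired. Give every `p : P`
out-degree `card P`, with one edge to each larger element and the remaining edges to an additional
sink, and start with as many chips on `p` as there are elements not strictly below it: then `p`
holds `card P` chips exactly when all its predecessors have fired and it has not. The
configurations reached correspond to the lower sets of fired elements, and a single firing to a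
covering of lower sets.
-/

section Game

variable {V : Type*} {E : V → V → ℕ}

theorem reaches_iff_reflTransGen {c d : V → ℕ} :
    Reaches E c d ↔ Relation.ReflTransGen (fun c d => ∃ v, FireStep E c v d) c d := by
  constructor
  · rintro ⟨l, hl, rfl⟩
    induction l generalizing c with
    | nil => exact .refl
    | cons v l ih => exact .head ⟨v, hl.1, rfl⟩ (ih hl.2)
  · intro h
    induction h using Relation.ReflTransGen.head_induction_on with
    | refl => exact ⟨[], trivial, rfl⟩
    | head hstep _ ih =>
      obtain ⟨v, hv, rfl⟩ := hstep
      obtain ⟨l, hl, rfl⟩ := ih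
      exact ⟨v :: l, ⟨hv, hl⟩, rfl⟩

/-- The configurations `conf a`, for `a : L`, realize the Hasse diagram of `L` in the game on `E`:
the results of firing one vertex in `conf a` are exactly the `conf b` with `b` an upper cover
of `a`. -/
def FiresAlongCovers {L : Type*} [PartialOrder L] (E : V → V → ℕ) (conf : L → V → ℕ) : Prop :=
  ∀ a c, (∃ v, FireStep E (conf a) v c) ↔ ∃ b, a ⋖ b ∧ conf b = c

namespace FiresAlongCovers

variable {L : Type*} [PartialOrder L] {conf : L → V → ℕ}

theorem fixedPt (h : FiresAlongCovers E conf) {a : L} (ha : IsMax a) : FixedPt E (conf a) := by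
  intro v hv
  obtain ⟨b, hab, -⟩ := (h a _).1 ⟨v, hv, rfl⟩
  exact ha.not_lt hab.lt

variable [LocallyFiniteOrder L]

theorem reaches_iff_exists_ge (h : FiresAlongCovers E conf) {a : L} {c : V → ℕ} :
    Reaches E (conf a) c ↔ ∃ b, a ≤ b ∧ conf b = c := by
  rw [reaches_iff_reflTransGen]
  constructor
  · intro hc
    induction hc with
    | refl => exact ⟨a, le_rfl, rfl⟩
    | tail _ hstep ih =>
      obtain ⟨b, hab, rfl⟩ := ih
      obtain ⟨b', hbb', rfl⟩ := (h b _).1 hstep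
      exact ⟨b', hab.trans hbb'.le, rfl⟩
  · rintro ⟨b, hab, rfl⟩
    exact Relation.ReflTransGen.lift conf (fun x y hxy => (h x _).2 ⟨y, hxy, rfl⟩) a b
      (le_iff_reflTransGen_covBy.1 hab)

theorem reaches_iff_le (h : FiresAlongCovers E conf) (hconf : Function.Injective conf) {a b : L} :
    Reaches E (conf a) (conf b) ↔ a ≤ b := by
  simp only [h.reaches_iff_exists_ge, hconf.eq_iff, exists_eq_right]

theorem reachesUFP [BoundedOrder L] (h : FiresAlongCovers E conf) : ReachesUFP E (conf ⊥) := by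
  refine ⟨conf ⊤, h.reaches_iff_exists_ge.2 ⟨⊤, bot_le, rfl⟩, h.fixedPt isMax_top, fun c hc => ?_⟩
  obtain ⟨a, -, rfl⟩ := h.reaches_iff_exists_ge.1 hc
  exact h.reaches_iff_exists_ge.2 ⟨⊤, le_top, rfl⟩

theorem generates [OrderBot L] (h : FiresAlongCovers E conf) (hconf : Function.Injective conf) :
    Generates E (conf ⊥) L := by
  let toReachable (a : L) : {c // Reaches E (conf ⊥) c} :=
    ⟨conf a, (h.reaches_iff_le hconf).2 bot_le⟩
  have hinj : Function.Injective toReachable := fun a b hab => hconf (congrArg Subtype.val hab)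
  have hsurj : Function.Surjective toReachable := fun ⟨c, hc⟩ =>
    let ⟨a, _, ha⟩ := h.reaches_iff_exists_ge.1 hc
    ⟨a, Subtype.ext ha⟩
  exact ⟨.ofBijective toReachable ⟨hinj, hsurj⟩, fun a b => (h.reaches_iff_le hconf).symm⟩

end FiresAlongCovers

theorem MemLCFG.of_orderIso {L M : Type*} [PartialOrder L] [PartialOrder M] (g : L ≃o M)
    (hM : MemLCFG M) : MemLCFG L := by
  obtain ⟨V, hV, E, O, hufp, f, hf⟩ := hM
  exact ⟨V, hV, E, O, hufp, g.toEquiv.trans f, fun a b => g.le_iff_le.symm.trans (hf _ _)⟩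

end Game

section LowerSet

theorem lowerSet_covBy_iff_exists_minimal {P : Type*} [Preorder P] [WellFoundedLT P]
    {S T : LowerSet P} :
    S ⋖ T ↔ ∃ p, Minimal (· ∉ S) p ∧ S ⊔ LowerSet.Iic p = T := by
  have lt_sup_Iic {p : P} (hp : p ∉ S) : S < S ⊔ LowerSet.Iic p :=
    left_lt_sup.2 fun h => hp (h (le_refl p))
  constructor
  · intro hST
    obtain ⟨p, ⟨hpT, hpS⟩, hmin⟩ := exists_minimal_of_wellFoundedLT (fun p => p ∈ T ∧ p ∉ S)
      (Set.exists_of_ssubset hST.lt)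
    refine ⟨p, ⟨hpS, fun q hq hqp => hmin ⟨T.lower hqp hpT, hq⟩ hqp⟩, ?_⟩
    have hle : S ⊔ LowerSet.Iic p ≤ T := sup_le hST.le (LowerSet.Iic_le.2 hpT)
    exact (hST.eq_or_eq le_sup_left hle).resolve_left (lt_sup_Iic hpS).ne'
  · rintro ⟨p, hp, rfl⟩
    refine ⟨lt_sup_Iic hp.prop, fun U hSU hU => ?_⟩
    obtain ⟨q, hqU, hqS⟩ := Set.exists_of_ssubset hSU
    have hqp : q ≤ p := (hU.le hqU).resolve_left hqS
    exact hU.not_ge (sup_le hSU.le (LowerSet.Iic_le.2 (U.lower (hp.le_of_le hqS hqp) hqU)))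

theorem mem_sup_Iic_iff_of_minimal {P : Type*} [PartialOrder P] {S : LowerSet P} {p q : P}
    (hp : Minimal (· ∉ S) p) : q ∈ S ⊔ LowerSet.Iic p ↔ q = p ∨ q ∈ S := by
  constructor
  · rintro (hq | hqp)
    · exact .inr hq
    · by_cases hq : q ∈ S
      · exact .inr hq
      · exact .inl (le_antisymm hqp (hp.le_of_le hq hqp))
  · rintro (rfl | hq)
    · exact .inr (le_refl q)
    · exact .inl hq

end LowerSet

section PosetGame

open scoped Finset

variable {P : Type*} [PartialOrder P] [Fintype P]

/-- The graph of the game attached to a finite poset `P`: `some p` has one edge to each larger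
element of `P`, and edges to the additional sink `none` bringing its out-degree to `card P`. -/
noncomputable def posetEdge : Option P → Option P → ℕ
  | none, _ => 0
  | some p, none => #{q | ¬ p < q}
  | some p, some q => if p < q then 1 else 0

/-- The configuration of the game on `posetEdge` in which exactly the elements of the lower set `S`
have fired; `S = ⊥` gives the initial configuration. -/
noncomputable def lowerSetConfig (S : LowerSet P) : Option P → ℕ
  | none => ∑ p with p ∈ S, posetEdge (some p) none
  | some p => if p ∈ S then 0 else #{q | q < p → q ∈ S}

theorem outDeg_posetEdge_some (p : P) : outDeg posetEdge (some p) = Fintype.card P := by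
  rw [outDeg, finsum_eq_sum_of_fintype, Fintype.sum_option]
  simp only [posetEdge, Finset.sum_boole, Nat.cast_id]
  rw [add_comm, Finset.card_filter_add_card_filter_not, Finset.card_univ]

theorem isSink_posetEdge_none : IsSink (posetEdge (P := P)) none := by
  simp [IsSink, outDeg, posetEdge]

theorem not_isSink_posetEdge_some (p : P) : ¬ IsSink posetEdge (some p) := by
  have : Nonempty P := ⟨p⟩
  simp [IsSink, outDeg_posetEdge_some, posetEdge]

theorem firable_lowerSetConfig_some_iff_minimal {S : LowerSet P} {p : P} :
    Firable posetEdge (lowerSetConfig S) (some p) ↔ Minimal (· ∉ S) p := by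
  rw [Firable, and_iff_right (not_isSink_posetEdge_some p), outDeg_posetEdge_some,
    minimal_iff_forall_lt]
  by_cases hp : p ∈ S
  · have : Nonempty P := ⟨p⟩
    simp [lowerSetConfig, hp]
  · rw [lowerSetConfig, if_neg hp, ← Finset.card_univ, (Finset.card_filter_le _ _).ge_iff_eq,
      Finset.card_filter_eq_iff]
    simp [hp]

theorem card_lt_imp_mem_sup_Iic {S : LowerSet P} {p : P} (hp : Minimal (· ∉ S) p) (q : P) :
    #{r | r < q → r ∈ S ⊔ LowerSet.Iic p} =
      #{r | r < q → r ∈ S} + if p < q then 1 else 0 := by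
  simp only [mem_sup_Iic_iff_of_minimal hp]
  split_ifs with hpq
  · rw [← Finset.card_insert_of_notMem (a := p) (by simp [hpq, hp.prop])]
    congr 1
    grind
  · rw [add_zero]
    congr 1
    grind

theorem fire_lowerSetConfig_some {S : LowerSet P} {p : P} (hp : Minimal (· ∉ S) p) :
    fire posetEdge (lowerSetConfig S) (some p) = lowerSetConfig (S ⊔ LowerSet.Iic p) := by
  have hmem (q : P) : q ∈ S ⊔ LowerSet.Iic p ↔ q = p ∨ q ∈ S := mem_sup_Iic_iff_of_minimal hp
  funext v
  rcases v with _ | q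
  · have hfired : Finset.univ.filter (· ∈ S ⊔ LowerSet.Iic p) =
        insert p (Finset.univ.filter (· ∈ S)) := by
      ext q
      simp [hmem]
    simp only [fire, reduceCtorEq, if_false, lowerSetConfig, hfired]
    rw [Finset.sum_insert (by simp [hp.prop]), add_comm]
  · rcases eq_or_ne q p with rfl | hqp
    · have hle : lowerSetConfig S (some q) ≤ Fintype.card P := by
        simp [lowerSetConfig, hp.prop, Finset.card_le_univ]
      simp only [fire, if_true, outDeg_posetEdge_some, Nat.sub_eq_zero_of_le hle]
      simp [posetEdge, lowerSetConfig, hmem]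
    · by_cases hq : q ∈ S
      · have hpq : ¬ p < q := fun hpq => hp.prop (S.lower hpq.le hq)
        simp [fire, lowerSetConfig, posetEdge, hmem, hqp, hq, hpq]
      · simp [fire, lowerSetConfig, posetEdge, hmem, hqp, hq, ← card_lt_imp_mem_sup_Iic hp q]

theorem lowerSetConfig_some_eq_zero_iff {S : LowerSet P} {p : P} :
    lowerSetConfig S (some p) = 0 ↔ p ∈ S := by
  have hself : p ∈ ({q | q < p → q ∈ S} : Finset P) := by simp
  simp [lowerSetConfig, Finset.card_ne_zero_of_mem hself]

theorem lowerSetConfig_injective : Function.Injective (lowerSetConfig (P := P)) := by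
  intro S T h
  ext p
  rw [SetLike.mem_coe, SetLike.mem_coe, ← lowerSetConfig_some_eq_zero_iff, h,
    lowerSetConfig_some_eq_zero_iff]

theorem firesAlongCovers_lowerSetConfig : FiresAlongCovers posetEdge (lowerSetConfig (P := P)) := by
  intro S c
  simp only [lowerSet_covBy_iff_exists_minimal]
  constructor
  · rintro ⟨_ | p, hfirable, rfl⟩
    · exact absurd isSink_posetEdge_none hfirable.1
    · have hp := firable_lowerSetConfig_some_iff_minimal.1 hfirable
      exact ⟨_, ⟨p, hp, rfl⟩, (fire_lowerSetConfig_some hp).symm⟩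
  · rintro ⟨_, ⟨p, hp, rfl⟩, rfl⟩
    exact ⟨some p, firable_lowerSetConfig_some_iff_minimal.2 hp, fire_lowerSetConfig_some hp⟩

end PosetGame

theorem memLCFG_lowerSet (P : Type) [PartialOrder P] [Finite P] : MemLCFG (LowerSet P) := by
  cases nonempty_fintype P
  cases nonempty_fintype (LowerSet P)
  let _ : LocallyFiniteOrder (LowerSet P) := Fintype.toLocallyFiniteOrder
  have hcovers := firesAlongCovers_lowerSetConfig (P := P)
  exact ⟨Option P, inferInstance, posetEdge, lowerSetConfig ⊥, hcovers.reachesUFP,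
    hcovers.generates lowerSetConfig_injective⟩

/-- every finite distributive lattice belongs to `L(CFG)`. -/
theorem stmt8 {L : Type*} [DistribLattice L] [Fintype L] [BoundedOrder L] :
    MemLCFG L := by
  let toShrink := orderIsoShrink.{0} {a : L // SupIrred a}
  exact .of_orderIso (OrderIso.lowerSetSupIrred.trans (LowerSet.map toShrink)) (memLCFG_lowerSet _)
end

section
/- Let CFG(G,O) be a chip firing game reaching a unique fixed point (not necessarily simple), with configuration space the finite ULD lattice L = CFG(G,O). Then the map κ : M → V(G) × ℕ defined by κ(m) = (ϑ(c,c'), δ_{c'}(ϑ(c,c'))), where c ⋖ c' is any cover of configurations with 𝔪(c,c') = m and ϑ(c,c') is the vertex fired to pass from c to c', is well-defined (independent of the chosen cover) and injective. -/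
open Classical

/-! Fired vertices are recorded with multiplicity. By the exchange property of firings
(`ValidSeq.diff`), the shot-vector of a join is the pointwise maximum of the shot-vectors, and a
cover adds one to a single entry. Let `w` be the vertex fired between a meet-irreducible `m` and its
only upper cover. If `z ≰ m`, then `m ⊔ z` lies above this cover, so `w` has fired more often
in `m ⊔ z`, hence in `z`, than in `m`. Thus `m` is the largest configuration in which `w` has fired
at most `δ_m(w)` times, which gives injectivity. If `v` is fired between `c` and `c'` with `c ≤ m`
and `c' ≰ m`, then `v` must be the vertex whose count passes this threshold. -/

section ListMultiset

variable {α : Type*} [DecidableEq α]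

theorem coe_append_diff_eq_union (l₁ l₂ : List α) :
    ((l₁ ++ l₂.diff l₁ : List α) : Multiset α) = (l₁ : Multiset α) ∪ l₂ := by
  rw [← Multiset.coe_add, ← Multiset.coe_sub, Multiset.union_comm, Multiset.union_def, add_comm]

theorem append_diff_perm_append_diff (l₁ l₂ : List α) :
    (l₁ ++ l₂.diff l₁).Perm (l₂ ++ l₁.diff l₂) := by
  rw [← Multiset.coe_eq_coe, coe_append_diff_eq_union, coe_append_diff_eq_union,
    Multiset.union_comm]

theorem notMem_diff_or_notMem_diff (u : α) (l₁ l₂ : List α) :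
    u ∉ l₂.diff l₁ ∨ u ∉ l₁.diff l₂ := by
  simp only [← List.count_eq_zero, List.count_diff]
  omega

theorem eq_and_count_eq_of_count_lt_count_cons {s t : Multiset α} {a b : α}
    (hst : s.count a ≤ t.count a) (hlt : t.count a < (b ::ₘ s).count a) :
    a = b ∧ (b ::ₘ s).count a = t.count a + 1 := by
  rw [Multiset.count_cons] at hlt ⊢
  split_ifs at hlt ⊢ with hab
  · exact ⟨hab, by omega⟩
  · omega

end ListMultiset

section Firing

variable {V : Type*} {E : V → V → ℕ} {c : V → ℕ} {u v w : V} {l l₁ l₂ : List V}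

theorem fireList_append (E : V → V → ℕ) (c : V → ℕ) (l₁ l₂ : List V) :
    fireList E c (l₁ ++ l₂) = fireList E (fireList E c l₁) l₂ := by
  induction l₁ generalizing c with
  | nil => rfl
  | cons v _ ih => exact ih _

theorem validSeq_append :
    ValidSeq E c (l₁ ++ l₂) ↔ ValidSeq E c l₁ ∧ ValidSeq E (fireList E c l₁) l₂ := by
  induction l₁ generalizing c with
  | nil => simp [ValidSeq, fireList]
  | cons v l ih => simp [ValidSeq, fireList, ih, and_assoc]

theorem ValidSeq.reaches_fireList (h : ValidSeq E c l) : Reaches E c (fireList E c l) :=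
  ⟨l, h, rfl⟩

theorem Firable.reaches_fire (h : Firable E c v) : Reaches E c (fire E c v) :=
  ⟨[v], ⟨h, trivial⟩, rfl⟩

theorem Reaches.trans {a b d : V → ℕ} (hab : Reaches E a b) (hbd : Reaches E b d) :
    Reaches E a d := by
  obtain ⟨l₁, h₁, rfl⟩ := hab
  obtain ⟨l₂, h₂, rfl⟩ := hbd
  exact ⟨l₁ ++ l₂, validSeq_append.2 ⟨h₁, h₂⟩, fireList_append E a l₁ l₂⟩

theorem Firable.fire_add_ite_outDeg (h : Firable E c v) (u : V) :
    fire E c v u + (if u = v then outDeg E v else 0) = c u + E v u := by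
  have hv := h.2
  by_cases huv : u = v
  · subst huv
    simp only [fire, if_true]
    omega
  · simp only [fire, if_neg huv, add_zero]

theorem Firable.fire_ne (h : Firable E c v) : fire E c v ≠ c := by
  intro heq
  have hv := h.fire_add_ite_outDeg v
  rw [heq, if_pos rfl] at hv
  exact h.1 (Nat.add_left_cancel hv)

theorem Firable.fire_of_ne (h : Firable E c v) (hvw : v ≠ w) : Firable E (fire E c w) v := by
  refine ⟨h.1, h.2.trans ?_⟩
  simp only [fire, if_neg hvw, Nat.le_add_right]

theorem ValidSeq.fireList_add_count_mul (h : ValidSeq E c l) (u : V) :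
    fireList E c l u + l.count u * outDeg E u = c u + (l.map fun w => E w u).sum := by
  induction l generalizing c with
  | nil => simp [fireList]
  | cons v l ih =>
    have htail := ih h.2
    have hhead := h.1.fire_add_ite_outDeg u
    simp only [fireList, List.map_cons, List.sum_cons]
    by_cases huv : u = v
    · subst huv
      rw [if_pos rfl] at hhead
      rw [List.count_cons_self, add_mul, one_mul]
      omega
    · rw [if_neg huv] at hhead
      rw [List.count_cons_of_ne (Ne.symm huv)]
      omega

theorem ValidSeq.fireList_eq_of_perm (h₁ : ValidSeq E c l₁) (h₂ : ValidSeq E c l₂)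
    (h : l₁.Perm l₂) : fireList E c l₁ = fireList E c l₂ := by
  funext u
  have e₁ := h₁.fireList_add_count_mul u
  have e₂ := h₂.fireList_add_count_mul u
  rw [h.count_eq, (h.map _).sum_eq] at e₁
  omega

theorem ValidSeq.le_fireList_of_notMem (h : ValidSeq E c l) (hu : u ∉ l) :
    c u ≤ fireList E c l u := by
  have hcount := h.fireList_add_count_mul u
  rw [List.count_eq_zero_of_not_mem hu] at hcount
  omega

theorem Firable.fire_comm (hv : Firable E c v) (hw : Firable E c w) (hvw : v ≠ w) :
    fire E (fire E c v) w = fire E (fire E c w) v :=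
  ValidSeq.fireList_eq_of_perm (l₁ := [v, w]) (l₂ := [w, v])
    ⟨hv, hw.fire_of_ne hvw.symm, trivial⟩ ⟨hw, hv.fire_of_ne hvw, trivial⟩
    (List.Perm.swap _ _ _)

theorem ValidSeq.erase (hl : ValidSeq E c l) (hv : Firable E c v) :
    ValidSeq E (fire E c v) (l.erase v) := by
  induction l generalizing c with
  | nil => trivial
  | cons w l ih =>
    by_cases hwv : w = v
    · subst hwv
      simpa only [List.erase_cons_head] using hl.2
    · rw [List.erase_cons_tail (by simpa using hwv)]
      refine ⟨hl.1.fire_of_ne hwv, ?_⟩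
      rw [hv.fire_comm hl.1 (Ne.symm hwv)]
      exact ih hl.2 (hv.fire_of_ne (Ne.symm hwv))

theorem ValidSeq.diff (h₁ : ValidSeq E c l₁) (h₂ : ValidSeq E c l₂) :
    ValidSeq E (fireList E c l₁) (l₂.diff l₁) := by
  induction l₁ generalizing c l₂ with
  | nil => exact h₂
  | cons v l ih =>
    rw [List.diff_cons]
    exact ih h₁.2 (h₂.erase h₁.1)

theorem ValidSeq.append_diff (h₁ : ValidSeq E c l₁) (h₂ : ValidSeq E c l₂) :
    ValidSeq E c (l₁ ++ l₂.diff l₁) :=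
  validSeq_append.2 ⟨h₁, h₁.diff h₂⟩

theorem ValidSeq.fireList_append_diff_comm (h₁ : ValidSeq E c l₁) (h₂ : ValidSeq E c l₂) :
    fireList E c (l₁ ++ l₂.diff l₁) = fireList E c (l₂ ++ l₁.diff l₂) :=
  (h₁.append_diff h₂).fireList_eq_of_perm (h₂.append_diff h₁) (append_diff_perm_append_diff l₁ l₂)

end Firing

section ChipConservation

variable {V : Type*} {E : V → V → ℕ} {c : V → ℕ} {v : V} {l l₁ l₂ : List V} {s : Finset V}

theorem Firable.sum_fire (h : Firable E c v) (hv : v ∈ s) (hs : Function.support (E v) ⊆ s) :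
    ∑ u ∈ s, fire E c v u = ∑ u ∈ s, c u := by
  have hdeg : outDeg E v = ∑ u ∈ s, E v u := finsum_eq_sum_of_support_subset _ hs
  have hsum := Finset.sum_congr rfl fun u (_ : u ∈ s) => h.fire_add_ite_outDeg u
  rw [Finset.sum_add_distrib, Finset.sum_add_distrib, Finset.sum_ite_eq' s v, if_pos hv,
    ← hdeg] at hsum
  exact Nat.add_right_cancel hsum

theorem ValidSeq.sum_fireList (h : ValidSeq E c l)
    (hs : ∀ v ∈ l, v ∈ s ∧ Function.support (E v) ⊆ s) :
    ∑ u ∈ s, fireList E c l u = ∑ u ∈ s, c u := by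
  induction l generalizing c with
  | nil => rfl
  | cons v l ih =>
    obtain ⟨hv, hl⟩ := List.forall_mem_cons.1 hs
    exact (ih h.2 hl).trans (h.1.sum_fire hv.1 hv.2)

theorem ValidSeq.fireList_eq_of_le (hE : ∀ v, (Function.support (E v)).Finite)
    (h : ValidSeq E c l) (hle : c ≤ fireList E c l) : fireList E c l = c := by
  funext u
  let s : Finset V := insert u (l.toFinset ∪ l.toFinset.biUnion fun v => (hE v).toFinset)
  have hs : ∀ v ∈ l, v ∈ s ∧ Function.support (E v) ⊆ s := fun v hv =>
    ⟨by simp [s, hv], fun w hw => by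
      simp only [s, Finset.mem_coe, Finset.mem_insert, Finset.mem_union, Finset.mem_biUnion,
        List.mem_toFinset, Set.Finite.mem_toFinset]
      exact .inr (.inr ⟨v, hv, hw⟩)⟩
  exact ((Finset.sum_eq_sum_iff_of_le fun w _ => hle w).1 (h.sum_fireList hs).symm u
    (Finset.mem_insert_self _ _)).symm

/-- A configuration is transient if no nonempty firing sequence leads back to it. Sequences
ending in such a configuration have well-defined shot-vectors. -/
def Transient (E : V → V → ℕ) (c : V → ℕ) : Prop :=
  ∀ l, ValidSeq E c l → fireList E c l = c → l = []

theorem transient_of_reaches_antisymm (h : ∀ d, Reaches E c d → Reaches E d c → d = c) :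
    Transient E c := by
  rintro (_ | ⟨v, l⟩) hl hc
  · rfl
  · exact absurd (h _ hl.1.reaches_fire ⟨l, hl.2, hc⟩) hl.1.fire_ne

/-- The two differences of the sequences have disjoint supports and lead from the common endpoint
to the same configuration, so every vertex gains chips; by conservation this closes a cycle. -/
theorem ValidSeq.perm_of_fireList_eq (hE : ∀ v, (Function.support (E v)).Finite)
    (h₁ : ValidSeq E c l₁) (h₂ : ValidSeq E c l₂) (h : fireList E c l₁ = fireList E c l₂)
    (htrans : Transient E (fireList E c l₁)) : l₁.Perm l₂ := by
  have h₁₂ := h₁.diff h₂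
  have h₂₁ := h₂.diff h₁
  have hend := h₁.fireList_append_diff_comm h₂
  rw [fireList_append, fireList_append, ← h] at hend
  rw [← h] at h₂₁
  have hle : fireList E c l₁ ≤ fireList E (fireList E c l₁) (l₂.diff l₁) := fun u => by
    rcases notMem_diff_or_notMem_diff u l₁ l₂ with hu | hu
    · exact h₁₂.le_fireList_of_notMem hu
    · exact (h₂₁.le_fireList_of_notMem hu).trans_eq (congrFun hend u).symm
  have hcycle := h₁₂.fireList_eq_of_le hE hle
  have hperm := append_diff_perm_append_diff l₁ l₂
  rwa [htrans _ h₁₂ hcycle, htrans _ h₂₁ (hend.symm.trans hcycle), List.append_nil,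
    List.append_nil] at hperm

end ChipConservation

section ShotVector

variable {V : Type*} {E : V → V → ℕ} {O : V → ℕ} {L : Type*}

/-- The shot-vector `δ` of the configuration `f x`, encoded as the multiset of the vertices fired
in a chosen firing sequence from `O`; `shotVector_eq_coe` shows that the choice is immaterial. -/
noncomputable def shotVector (f : L ≃ {c : V → ℕ // Reaches E O c}) (x : L) : Multiset V :=
  ((f x).2.choose : List V)

variable {f : L ≃ {c : V → ℕ // Reaches E O c}} {x : L}

theorem exists_apply_eq_of_reaches {c : V → ℕ} (h : Reaches E (f x).val c) :
    ∃ y, (f y).val = c :=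
  ⟨f.symm ⟨c, (f x).2.trans h⟩, by rw [f.apply_symm_apply]⟩

section PartialOrder

variable [PartialOrder L]
  (hE : ∀ v, (Function.support (E v)).Finite)
  (hf : ∀ a b : L, a ≤ b ↔ Reaches E (f a).val (f b).val)
  {y z : L} {v : V} {l : List V}

include hf

theorem transient_apply (x : L) : Transient E (f x).val :=
  transient_of_reaches_antisymm fun d hxd hdx => by
    obtain ⟨y, rfl⟩ := exists_apply_eq_of_reaches hxd
    exact congrArg (fun a => (f a).val) (le_antisymm ((hf y x).2 hdx) ((hf x y).2 hxd))

theorem FireStep.le (h : FireStep E (f x).val v (f y).val) : x ≤ y :=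
  (hf x y).2 (h.2 ▸ h.1.reaches_fire)

theorem exists_fireStep_le_of_lt (h : x < z) :
    ∃ v y, FireStep E (f x).val v (f y).val ∧ y ≤ z := by
  obtain ⟨_ | ⟨v, l⟩, hl, hz⟩ := (hf x z).1 h.le
  · exact absurd (f.injective (Subtype.ext hz)) h.ne
  · obtain ⟨y, hy⟩ := exists_apply_eq_of_reaches hl.1.reaches_fire
    exact ⟨v, y, ⟨hl.1, hy.symm⟩, (hf y z).2 (hy ▸ ⟨l, hl.2, hz⟩)⟩

include hE

theorem shotVector_eq_coe (hl : ValidSeq E O l) (hx : fireList E O l = (f x).val) :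
    shotVector f x = l := by
  obtain ⟨hs, hsx⟩ := (f x).2.choose_spec
  have htrans := transient_apply hf x
  rw [← hsx] at htrans
  exact Multiset.coe_eq_coe.2 (hs.perm_of_fireList_eq hE hl (hsx.trans hx.symm) htrans)

theorem exists_shotVector_eq_coe (x : L) :
    ∃ l, ValidSeq E O l ∧ fireList E O l = (f x).val ∧ shotVector f x = l := by
  obtain ⟨l, hl, hx⟩ := (f x).2
  exact ⟨l, hl, hx, shotVector_eq_coe hE hf hl hx⟩

theorem shotVector_eq_add (hl : ValidSeq E (f x).val l)
    (hy : fireList E (f x).val l = (f y).val) : shotVector f y = shotVector f x + l := by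
  obtain ⟨s, hs, hsx, hx⟩ := exists_shotVector_eq_coe hE hf x
  rw [hx, Multiset.coe_add]
  exact shotVector_eq_coe hE hf (validSeq_append.2 ⟨hs, hsx ▸ hl⟩)
    (by rw [fireList_append, hsx, hy])

theorem shotVector_mono : Monotone (shotVector f) := fun x y hxy => by
  obtain ⟨l, hl, hy⟩ := (hf x y).1 hxy
  rw [shotVector_eq_add hE hf hl hy]
  exact Multiset.le_add_right _ _

theorem FireStep.shotVector_eq_cons (h : FireStep E (f x).val v (f y).val) :
    shotVector f y = v ::ₘ shotVector f x := by
  rw [shotVector_eq_add hE hf (l := [v]) ⟨h.1, trivial⟩ h.2, Multiset.coe_singleton, add_comm,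
    Multiset.singleton_add]

theorem shotVector_strictMono : StrictMono (shotVector f) := fun x y hxy => by
  obtain ⟨v, z, hstep, hzy⟩ := exists_fireStep_le_of_lt hf hxy
  calc shotVector f x < v ::ₘ shotVector f x := Multiset.lt_cons_self _ _
    _ = shotVector f z := (hstep.shotVector_eq_cons hE hf).symm
    _ ≤ shotVector f y := shotVector_mono hE hf hzy

theorem FireStep.covBy (h : FireStep E (f x).val v (f y).val) : x ⋖ y := by
  have hδ : shotVector f x ⋖ shotVector f y :=
    h.shotVector_eq_cons hE hf ▸ Multiset.covBy_cons _ _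
  have hδ_mono := shotVector_strictMono hE hf
  refine ⟨(FireStep.le hf h).lt_of_ne ?_, fun z hxz hzy => hδ.2 (hδ_mono hxz) (hδ_mono hzy)⟩
  rintro rfl
  exact hδ.lt.ne rfl

end PartialOrder

section Lattice

variable [Lattice L]
  (hE : ∀ v, (Function.support (E v)).Finite)
  (hf : ∀ a b : L, a ≤ b ↔ Reaches E (f a).val (f b).val)
include hE hf

theorem shotVector_sup (x y : L) : shotVector f (x ⊔ y) = shotVector f x ∪ shotVector f y := by
  refine le_antisymm ?_ (Multiset.union_le (shotVector_mono hE hf le_sup_left)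
    (shotVector_mono hE hf le_sup_right))
  obtain ⟨l₁, h₁, hx, hδx⟩ := exists_shotVector_eq_coe hE hf x
  obtain ⟨l₂, h₂, hy, hδy⟩ := exists_shotVector_eq_coe hE hf y
  have hxz := (h₁.diff h₂).reaches_fireList
  have hyz := (h₂.diff h₁).reaches_fireList
  rw [← fireList_append, hx] at hxz
  rw [← fireList_append, ← h₁.fireList_append_diff_comm h₂, hy] at hyz
  obtain ⟨z, hz⟩ := exists_apply_eq_of_reaches hxz
  have hle : x ⊔ y ≤ z := sup_le ((hf x z).2 (hz ▸ hxz)) ((hf y z).2 (hz ▸ hyz))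
  calc shotVector f (x ⊔ y) ≤ shotVector f z := shotVector_mono hE hf hle
    _ = ↑(l₁ ++ l₂.diff l₁) := shotVector_eq_coe hE hf (h₁.append_diff h₂) hz.symm
    _ = shotVector f x ∪ shotVector f y := by rw [coe_append_diff_eq_union, hδx, hδy]

theorem MeetIrred.exists_forall_le_iff_count_le {m : L} (hm : MeetIrred m) :
    ∃ w, ∀ z, z ≤ m ↔ (shotVector f z).count w ≤ (shotVector f m).count w := by
  obtain ⟨y, hmy, hunique⟩ := hm
  obtain ⟨w, y', hw, -⟩ := exists_fireStep_le_of_lt hf hmy.lt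
  obtain rfl : y' = y := hunique y' (hw.covBy hE hf)
  refine ⟨w, fun z => ⟨fun hz => Multiset.count_le_of_le w (shotVector_mono hE hf hz), ?_⟩⟩
  contrapose!
  intro hz
  obtain ⟨v, y, hv, hy⟩ := exists_fireStep_le_of_lt hf (left_lt_sup.2 hz)
  obtain rfl : y = y' := hunique y (hv.covBy hE hf)
  have hcount := Multiset.count_le_of_le w (shotVector_mono hE hf hy)
  rw [hw.shotVector_eq_cons hE hf, Multiset.count_cons_self, shotVector_sup hE hf,
    Multiset.count_union] at hcount
  exact (le_max_iff.1 hcount).resolve_left (Nat.not_succ_le_self _)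

end Lattice

end ShotVector

theorem stmt9_general {V : Type*} (E : V → V → ℕ) (O : V → ℕ)
    (hE : ∀ v, (Function.support (E v)).Finite) {L : Type*} [Lattice L]
    (f : L ≃ {c : V → ℕ // Reaches E O c})
    (hf : ∀ a b : L, a ≤ b ↔ Reaches E (f a).val (f b).val) :
    ∃ κ : {m : L // MeetIrred m} → V × ℕ,
      (∀ (m : {m : L // MeetIrred m}) (c c' : L) (v : V) (l : List V),
        m.val ∈ MsetDiff c c' → FireStep E (f c).val v (f c').val →
        ValidSeq E O l → fireList E O l = (f c').val →
        κ m = (v, l.count v)) ∧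
      Function.Injective κ := by
  choose w hw using fun m : {m : L // MeetIrred m} => m.2.exists_forall_le_iff_count_le hE hf
  refine ⟨fun m => (w m, (shotVector f m.val).count (w m) + 1), ?_, fun m n hmn => ?_⟩
  · rintro m c c' v l ⟨-, hcm, hc'm⟩ hstep hl hlc'
    have hcount := lt_of_not_ge (mt (hw m c').2 hc'm)
    have hcons := hstep.shotVector_eq_cons hE hf
    rw [hcons] at hcount
    obtain ⟨hwv, heq⟩ := eq_and_count_eq_of_count_lt_count_cons ((hw m c).1 hcm) hcount
    dsimp only
    rw [← heq, ← hcons, shotVector_eq_coe hE hf hl hlc', Multiset.coe_count, hwv]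
  · obtain ⟨hwmn, hcount⟩ := Prod.mk.inj hmn
    refine Subtype.ext (eq_of_forall_le_iff fun z => ?_)
    rw [hw m, hw n, Nat.succ.inj hcount, hwmn]

/-- for a (not necessarily simple) CFG reaching a unique fixed point
generating the finite ULD lattice `L`, the map `κ : M → V × ℕ` sending `m` to the pair
(vertex fired in any cover `c ⋖ c'` with `𝔪(c,c') = m`, its shot-vector value at `c'`)
is well-defined and injective. -/
theorem stmt9 {V : Type*} [Finite V] (E : V → V → ℕ) (O : V → ℕ)
    (hUFP : ReachesUFP E O)
    {L : Type*} [Lattice L] [Fintype L] [BoundedOrder L] (hULD : IsULD L)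
    (f : L ≃ {c : V → ℕ // Reaches E O c})
    (hf : ∀ a b : L, a ≤ b ↔ Reaches E (f a).val (f b).val) :
    ∃ κ : {m : L // MeetIrred m} → V × ℕ,
      (∀ (m : {m : L // MeetIrred m}) (c c' : L) (v : V) (l : List V),
        c ⋖ c' → MsetDiff c c' = {m.val} → FireStep E (f c).val v (f c').val →
        ValidSeq E O l → fireList E O l = (f c').val →
        κ m = (v, l.count v)) ∧
      Function.Injective κ := by
  obtain ⟨κ, hκ, hinj⟩ := stmt9_general E O (fun v => Set.toFinite _) f hf
  exact ⟨κ, fun m c c' v l _ hm => hκ m c c' v l (hm ▸ rfl), hinj⟩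
end
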